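/- Let A and U be nonempty sets with the discrete topology, let X ⊆ A^ℤ be a bilaterally-finite shift space, let Y ⊆ U^ℤ be a shift space, and let Ψ : X → Y be a bijective extended sliding block code of finite degree. Then the inverse map Ψ⁻¹ : Y → X is continuous and shift-commuting (Ψ⁻¹ ∘ σ = σ ∘ Ψ⁻¹); that is, Ψ is reversible and Ψ⁻¹ is itself an extended sliding block code. -/

import Mathlib

open Filter Topology Set

namespace ShiftPaper

/-- The shift map `σ` on the full shift `A^ℤ`: `σ(x)_n = x_{n+1}`. -/
def shiftMap {A : Type*} (x : ℤ → A) : ℤ → A := fun n => x (n + 1)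

/-- The `n`-th iterate of the shift: `σ^n(x)_m = x_{m+n}` (for `n : ℤ`). -/
def shiftIter {A : Type*} (n : ℤ) (x : ℤ → A) : ℤ → A := fun m => x (m + n)

/-- A shift space: a nonempty closed shift-invariant subset of the full shift. -/
def IsShiftSpace {A : Type*} [TopologicalSpace A] (X : Set (ℤ → A)) : Prop :=
  X.Nonempty ∧ IsClosed X ∧ shiftMap '' X = X

/-- The cylinder in `X` determined by the finite set `s ⊆ ℤ` and the values of `h` on `s`:
`C_X(h) = X ∩ {x : x_i = h_i for all i ∈ s}`. -/
def cylX {A : Type*} (X : Set (ℤ → A)) (s : Finset ℤ) (h : ℤ → A) : Set (ℤ → A) :=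
  X ∩ {x | ∀ i ∈ s, x i = h i}

/-- A barrier on `X`: a partition of `X` all of whose members are nonempty cylinders in `X`. -/
def IsBarrier {A : Type*} (X : Set (ℤ → A)) (B : Set (Set (ℤ → A))) : Prop :=
  (∀ C ∈ B, C.Nonempty ∧ ∃ (s : Finset ℤ) (h : ℤ → A), C = cylX X s h) ∧
  (∀ x ∈ X, ∃! C, C ∈ B ∧ x ∈ C)

/-- `Ψ` is induced by the local rule `φ` on the barrier `B`:
`Ψ(x)_n = φ(C)` whenever `C ∈ B` contains `σ^n(x)`. -/
def InducedBy {A U : Type*} (X : Set (ℤ → A)) (Ψ : (ℤ → A) → ℤ → U)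
    (B : Set (Set (ℤ → A))) (φ : Set (ℤ → A) → U) : Prop :=
  ∀ x ∈ X, ∀ n : ℤ, ∀ C ∈ B, shiftIter n x ∈ C → Ψ x n = φ C

/-- `Ψ` is an extended sliding block code on `X`. -/
def IsESBC {A U : Type*} (X : Set (ℤ → A)) (Ψ : (ℤ → A) → ℤ → U) : Prop :=
  ∃ (B : Set (Set (ℤ → A))) (φ : Set (ℤ → A) → U), IsBarrier X B ∧ InducedBy X Ψ B φ

/-- `Ψ` is an extended sliding block code of finite degree: it is induced by a local rule `φ`
on a barrier `B` (so `B` is attached to `Ψ`) such that for each symbol `u` only finitely many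
members of `B` have `φ`-value (i.e. `Ψ₀`-value) `u`. -/
def IsFiniteDegreeESBC {A U : Type*} (X : Set (ℤ → A)) (Ψ : (ℤ → A) → ℤ → U) : Prop :=
  ∃ (B : Set (Set (ℤ → A))) (φ : Set (ℤ → A) → U), IsBarrier X B ∧ InducedBy X Ψ B φ ∧
    ∀ u : U, {C | C ∈ B ∧ φ C = u}.Finite

/-- The data produced by the crucial lemma for a distinguished sequence `x` with
`Ψ(x^k) → y`: a sequence of partial functions `h_ℓ` (with finite domains `s_ℓ`, each
extending the previous one) and a decreasing sequence `S_ℓ` of infinite subsets of `ℕ`,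
such that `x^k ∈ C_X(h_ℓ)` for `k ∈ S_ℓ` and `Ψ(z)|_{[-ℓ,ℓ]} = y|_{[-ℓ,ℓ]}` on `C_X(h_ℓ)`. -/
def AssocData {A U : Type*} (X : Set (ℤ → A)) (Ψ : (ℤ → A) → ℤ → U)
    (x : ℕ → ℤ → A) (y : ℤ → U)
    (s : ℕ → Finset ℤ) (h : ℕ → ℤ → A) (S : ℕ → Set ℕ) : Prop :=
  (∀ ℓ : ℕ, s ℓ ⊆ s (ℓ + 1)) ∧
  (∀ ℓ : ℕ, ∀ i ∈ s ℓ, h (ℓ + 1) i = h ℓ i) ∧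
  (∀ ℓ : ℕ, (S ℓ).Infinite) ∧
  (∀ ℓ : ℕ, S (ℓ + 1) ⊆ S ℓ) ∧
  (∀ ℓ : ℕ, ∀ k ∈ S ℓ, x k ∈ cylX X (s ℓ) (h ℓ)) ∧
  (∀ ℓ : ℕ, ∀ z ∈ cylX X (s ℓ) (h ℓ), ∀ j : ℤ, |j| ≤ (ℓ : ℤ) → Ψ z j = y j)

/-- The symbol `a` belongs to `L₁(X)`: it appears in some point of `X`. -/
def inLetter {A : Type*} (X : Set (ℤ → A)) (a : A) : Prop :=
  ∃ x ∈ X, ∃ i : ℤ, x i = a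

/-- The two-letter word `ab` belongs to the language `L(X)`. -/
def inLang2 {A : Type*} (X : Set (ℤ → A)) (a b : A) : Prop :=
  ∃ x ∈ X, ∃ i : ℤ, x i = a ∧ x (i + 1) = b

/-- `X` is right-finite: for each allowed symbol `a`, only finitely many `b` with `ab ∈ L(X)`. -/
def RightFinite {A : Type*} (X : Set (ℤ → A)) : Prop :=
  ∀ a : A, inLetter X a → {b : A | inLang2 X a b}.Finite

/-- `X` is left-finite: for each allowed symbol `a`, only finitely many `b` with `ba ∈ L(X)`. -/
def LeftFinite {A : Type*} (X : Set (ℤ → A)) : Prop :=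
  ∀ a : A, inLetter X a → {b : A | inLang2 X b a}.Finite

end ShiftPaper

open ShiftPaper

namespace ShiftPaper

lemma shiftIter_mem {A : Type*} {X : Set (ℤ → A)} (hX : shiftMap '' X = X) (n : ℤ) :
    ∀ x ∈ X, shiftIter n x ∈ X := by
  induction n using Int.induction_on with
  | zero => intro x hx; convert hx using 1; funext m; simp [shiftIter]
  | succ i ih =>
    intro x hx
    rw [← hX]
    refine ⟨shiftIter i x, ih x hx, ?_⟩
    funext m; simp only [shiftIter, shiftMap]; congr 1; ring
  | pred i ih =>
    intro x hx
    rw [← hX] at hx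
    obtain ⟨w, hw, rfl⟩ := hx
    convert ih w hw using 1
    funext m; simp only [shiftIter, shiftMap]; congr 1; ring

lemma psi_shift {A U : Type*} {X : Set (ℤ → A)} (hX : shiftMap '' X = X)
    {Ψ : (ℤ → A) → ℤ → U} {B : Set (Set (ℤ → A))} {φ : Set (ℤ → A) → U}
    (hB : IsBarrier X B) (hI : InducedBy X Ψ B φ) (n : ℤ) (x : ℤ → A) (hx : x ∈ X) :
    Ψ (shiftIter n x) = shiftIter n (Ψ x) := by
  funext m
  have e : shiftIter m (shiftIter n x) = shiftIter (m + n) x := by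
    funext k; simp only [shiftIter]; congr 1; ring
  obtain ⟨C, ⟨hC, hxC⟩, -⟩ := hB.2 _ (shiftIter_mem hX (m + n) x hx)
  have h1 := hI x hx (m + n) C hC hxC
  have h2 := hI _ (shiftIter_mem hX n x hx) m C hC (by rw [e]; exact hxC)
  rw [h2]; exact h1.symm

/-- A continuous map commuting with all iterates of the shift is an ESBC. -/
lemma esbc_of_continuousOn {A U : Type*} [TopologicalSpace A] [DiscreteTopology A] [Nonempty A]
    [TopologicalSpace U] [DiscreteTopology U] {Y : Set (ℤ → U)} (hY : shiftMap '' Y = Y)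
    {Φ : (ℤ → U) → ℤ → A} (hc : ContinuousOn Φ Y)
    (hs : ∀ n : ℤ, ∀ y ∈ Y, Φ (shiftIter n y) = shiftIter n (Φ y)) : IsESBC Y Φ := by
  classical
  let K : ℕ → Finset ℤ := fun N => Finset.Icc (-(N : ℤ)) N
  let P : (ℤ → U) → ℕ → Prop := fun y N => ∀ z ∈ cylX Y (K N) y, Φ z 0 = Φ y 0
  have hP : ∀ y ∈ Y, ∃ N, P y N := by
    intro y hy
    have h1 : ∀ᶠ z in 𝓝[Y] y, Φ z 0 = Φ y 0 := by
      have := tendsto_pi_nhds.1 (hc y hy) 0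
      rw [nhds_discrete, tendsto_pure] at this
      exact this
    rw [eventually_nhdsWithin_iff, nhds_pi, Filter.eventually_iff, Filter.mem_pi] at h1
    obtain ⟨I, hI, t, ht, hsub⟩ := h1
    obtain ⟨N, hN⟩ : ∃ N : ℕ, ∀ i ∈ I, i.natAbs ≤ N := by
      obtain ⟨N, hN⟩ := (hI.image Int.natAbs).bddAbove
      exact ⟨N, fun i hi => hN ⟨i, hi, rfl⟩⟩
    refine ⟨N, fun z hz => hsub (a := z) ?_ hz.1⟩
    intro i hi
    have := hz.2 i (by have := hN i hi; simp only [K, Finset.mem_Icc]; omega)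
    rw [this]
    exact mem_of_mem_nhds (ht i)
  have hcyl : ∀ N y z, z ∈ cylX Y (K N) y → cylX Y (K N) z = cylX Y (K N) y := by
    intro N y z hz
    ext w
    constructor
    · exact fun hw => ⟨hw.1, fun i hi => (hw.2 i hi).trans (hz.2 i hi)⟩
    · exact fun hw => ⟨hw.1, fun i hi => (hw.2 i hi).trans (hz.2 i hi).symm⟩
  let D : (ℤ → U) → Set (ℤ → U) := fun y => cylX Y (K (sInf {N | P y N})) y
  have hself : ∀ N, ∀ y ∈ Y, y ∈ cylX Y (K N) y := fun N y hy => ⟨hy, fun _ _ => rfl⟩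
  have hmin : ∀ y ∈ Y, P y (sInf {N | P y N}) := fun y hy => Nat.sInf_mem (hP y hy)
  have htr : ∀ N y z, z ∈ cylX Y (K N) y → P y N → P z N := by
    intro N y z hz hp w hw
    rw [hcyl N y z hz] at hw
    rw [hp w hw, hp z hz]
  have hDeq : ∀ y ∈ Y, ∀ z ∈ D y, D z = D y := by
    intro y hy z hz
    have h1 : P z (sInf {N | P y N}) := htr _ y z hz (hmin y hy)
    have hle : sInf {N | P z N} ≤ sInf {N | P y N} := Nat.sInf_le h1
    have hyz : y ∈ cylX Y (K (sInf {N | P z N})) z := by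
      refine ⟨hy, fun i hi => (hz.2 i ?_).symm⟩
      simp only [K, Finset.mem_Icc] at hi ⊢
      omega
    have hle2 : sInf {N | P y N} ≤ sInf {N | P z N} :=
      Nat.sInf_le (htr _ z y hyz (hmin z hz.1))
    have : sInf {N | P z N} = sInf {N | P y N} := le_antisymm hle hle2
    simp only [D]
    rw [this]
    exact hcyl _ y z hz
  let φ : Set (ℤ → U) → A := fun C => if h : C.Nonempty then Φ h.some 0 else Classical.arbitrary A
  refine ⟨D '' Y, φ, ⟨?_, ?_⟩, ?_⟩
  · rintro _ ⟨y, hy, rfl⟩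
    exact ⟨⟨y, hself _ y hy⟩, _, _, rfl⟩
  · intro y hy
    refine ⟨D y, ⟨⟨y, hy, rfl⟩, hself _ y hy⟩, ?_⟩
    rintro _ ⟨⟨w, hw, rfl⟩, hyw⟩
    exact (hDeq w hw y hyw).symm
  · rintro y hy n _ ⟨w, hw, rfl⟩ hn
    have hne : (D w).Nonempty := ⟨_, hn⟩
    have h1 : Φ y n = Φ (shiftIter n y) 0 := by rw [hs n y hy]; simp [shiftIter]
    simp only [φ, dif_pos hne]
    rw [h1, hmin w hw _ hn, hmin w hw _ hne.some_mem]

/-- Along an ultrafilter on a bilaterally finite `X`, one stable coordinate makes all stable. -/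
lemma stable_all {A ι : Type*} {X : Set (ℤ → A)} (hr : RightFinite X) (hl : LeftFinite X)
    (g : Ultrafilter ι) (f : ι → ℤ → A) (hf : ∀ᶠ k in (g : Filter ι), f k ∈ X)
    (j : ℤ) (a : A) (ha : ∀ᶠ k in (g : Filter ι), f k j = a) (i : ℤ) :
    ∃ b, ∀ᶠ k in (g : Filter ι), f k i = b := by
  have key : ∀ (p : ι → A) (s : Set A), s.Finite → (∀ᶠ k in (g : Filter ι), p k ∈ s) →
      ∃ b, ∀ᶠ k in (g : Filter ι), p k = b := by
    intro p s hs hp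
    have : (⋃ b ∈ s, {k | p k = b}) ∈ g := by
      filter_upwards [hp] with k hk
      simpa using hk
    obtain ⟨b, -, hb⟩ := (Ultrafilter.finite_biUnion_mem_iff hs).1 this
    exact ⟨b, hb⟩
  induction i using Int.inductionOn' (b := j) with
  | zero => exact ⟨a, ha⟩
  | succ m _ ih =>
    obtain ⟨b, hb⟩ := ih
    obtain ⟨k, hk1, hk2⟩ := (hf.and hb).exists
    refine key (fun k => f k (m + 1)) _ (hr b ⟨_, hk1, m, hk2⟩) ?_
    filter_upwards [hf, hb] with k h1 h2
    exact ⟨f k, h1, m, h2, rfl⟩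
  | pred m _ ih =>
    obtain ⟨b, hb⟩ := ih
    obtain ⟨k, hk1, hk2⟩ := (hf.and hb).exists
    refine key (fun k => f k (m - 1)) _ (hl b ⟨_, hk1, m, hk2⟩) ?_
    filter_upwards [hf, hb] with k h1 h2
    exact ⟨f k, h1, m - 1, rfl, by simpa using h2⟩

end ShiftPaper

/-- a bijective finite degree ESBC `Ψ : X → Y` on a bilaterally-finite
shift space `X` is reversible: its inverse is continuous and shift-commuting, i.e. it is
itself an ESBC. -/
theorem reversible_of_bilaterally_finite
    {A U : Type*} [TopologicalSpace A] [DiscreteTopology A] [Nonempty A]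
    [TopologicalSpace U] [DiscreteTopology U] [Nonempty U]
    (X : Set (ℤ → A)) (hX : IsShiftSpace X)
    (hbf : RightFinite X ∧ LeftFinite X)
    (Y : Set (ℤ → U)) (hY : IsShiftSpace Y)
    (Ψ : (ℤ → A) → ℤ → U) (hΨ : IsFiniteDegreeESBC X Ψ)
    (hinj : Set.InjOn Ψ X) (hsurj : Ψ '' X = Y) :
    ∃ Φ : (ℤ → U) → ℤ → A,
      (∀ x ∈ X, Φ (Ψ x) = x) ∧
      (∀ y ∈ Y, Φ y ∈ X ∧ Ψ (Φ y) = y) ∧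
      ContinuousOn Φ Y ∧
      (∀ y ∈ Y, Φ (shiftMap y) = shiftMap (Φ y)) ∧
      IsESBC Y Φ := by
  classical
  obtain ⟨B, φ, hB, hI, hfin⟩ := hΨ
  obtain ⟨-, hXc, hXs⟩ := hX
  have hYs := hY.2.2
  set Φ : (ℤ → U) → ℤ → A := Function.invFunOn Ψ X with hΦ
  have hR : ∀ y ∈ Y, Φ y ∈ X ∧ Ψ (Φ y) = y := by
    intro y hy
    have hy' : ∃ x ∈ X, Ψ x = y := by rw [← hsurj] at hy; exact hy
    exact ⟨Function.invFunOn_mem hy', Function.invFunOn_eq hy'⟩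
  have hL : ∀ x ∈ X, Φ (Ψ x) = x := by
    intro x hx
    obtain ⟨h1, h2⟩ := hR (Ψ x) (hsurj ▸ ⟨x, hx, rfl⟩)
    exact hinj h1 hx h2
  have hS : ∀ n : ℤ, ∀ y ∈ Y, Φ (shiftIter n y) = shiftIter n (Φ y) := by
    intro n y hy
    obtain ⟨h1, h2⟩ := hR y hy
    have := hL _ (shiftIter_mem hXs n _ h1)
    rwa [psi_shift hXs hB hI n _ h1, h2] at this
  have hC : ContinuousOn Φ Y := by
    intro y hy
    refine tendsto_iff_ultrafilter _ _ _ |>.2 fun g hg => ?_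
    have hgY : ∀ᶠ k in (g : Filter (ℤ → U)), k ∈ Y := hg self_mem_nhdsWithin
    have hgX : ∀ᶠ k in (g : Filter (ℤ → U)), Φ k ∈ X := hgY.mono fun k hk => (hR k hk).1
    have hcoord : ∀ n : ℤ, ∀ᶠ k in (g : Filter (ℤ → U)), k n = y n := by
      intro n
      have h1 : Tendsto (fun k : ℤ → U => k n) (𝓝 y) (𝓝 (y n)) := (continuous_apply n).tendsto y
      rw [nhds_discrete U, tendsto_pure] at h1
      exact (hg.trans nhdsWithin_le_nhds) h1
    -- the stable barrier member at each position
    have hstab : ∀ n : ℤ, ∃ C ∈ B, φ C = y n ∧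
        ∀ᶠ k in (g : Filter (ℤ → U)), shiftIter n (Φ k) ∈ C := by
      intro n
      have hmem : (⋃ C ∈ {C | C ∈ B ∧ φ C = y n}, {k | shiftIter n (Φ k) ∈ C}) ∈ g := by
        filter_upwards [hgY, hcoord n] with k hk hkn
        obtain ⟨h1, h2⟩ := hR k hk
        obtain ⟨C, ⟨hCB, hkC⟩, -⟩ := hB.2 _ (shiftIter_mem hXs n _ h1)
        have h3 := hI _ h1 n C hCB hkC
        rw [h2, hkn] at h3
        exact mem_biUnion (show C ∈ {C | C ∈ B ∧ φ C = y n} from ⟨hCB, h3.symm⟩) hkC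
      obtain ⟨C, hC1, hC2⟩ := (Ultrafilter.finite_biUnion_mem_iff (hfin (y n))).1 hmem
      exact ⟨C, hC1.1, hC1.2, hC2⟩
    have hone : (∃ (j : ℤ) (a : A), ∀ᶠ k in (g : Filter (ℤ → U)), Φ k j = a) := by
      obtain ⟨C, hCB, hCy, hCe⟩ := hstab 0
      obtain ⟨s, h, hCs⟩ := (hB.1 C hCB).2
      rcases s.eq_empty_or_nonempty with rfl | ⟨j, hj⟩
      · have hCX : C = X := by rw [hCs]; simp [cylX]
        refine ⟨0, Φ y 0, ?_⟩
        filter_upwards [hgX] with k hk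
        have hyX := (hR y hy).1
        have : Φ k = Φ y := by
          apply hinj hk hyX
          funext n
          rw [hI _ hk n C hCB (hCX ▸ shiftIter_mem hXs n _ hk),
            hI _ hyX n C hCB (hCX ▸ shiftIter_mem hXs n _ hyX)]
        rw [this]
      · refine ⟨j, h j, ?_⟩
        filter_upwards [hCe] with k hk
        rw [hCs] at hk
        simpa [shiftIter] using hk.2 j hj
    obtain ⟨j, a, ha⟩ := hone
    choose z hz using stable_all hbf.1 hbf.2 g Φ hgX j a ha
    have hzt : Tendsto Φ (g : Filter (ℤ → U)) (𝓝 z) := by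
      refine tendsto_pi_nhds.2 fun i => ?_
      rw [nhds_discrete, tendsto_pure]
      exact hz i
    have hzX : z ∈ X := hXc.mem_of_tendsto hzt hgX
    have hzy : Ψ z = y := by
      funext n
      obtain ⟨C, hCB, hCy, hCe⟩ := hstab n
      obtain ⟨s, h, hCs⟩ := (hB.1 C hCB).2
      rw [← hCy]
      refine hI z hzX n C hCB ?_
      rw [hCs] at hCe ⊢
      refine ⟨shiftIter_mem hXs n _ hzX, fun i hi => ?_⟩
      obtain ⟨k, hk1, hk2⟩ := (hCe.and (hz (i + n))).exists
      have := hk1.2 i hi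
      simp only [shiftIter] at this ⊢
      rw [← hk2, this]
    rw [← hzy, hL z hzX]
    exact hzt
  exact ⟨Φ, hL, hR, hC, fun y hy => hS 1 y hy, esbc_of_continuousOn hYs hC hS⟩
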